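/- Let α ∈ ℝ and let ψ : ℝ → ℂ be three times continuously differentiable. Define the vector field u(x,y) = e^{iαx}·(−ψ'(y), iα·ψ(y)) (i.e. u = ∇⊥(e^{iαx}ψ(y))). Then the scalar curl of the convective term (u·∇)u satisfies ∇×[(u·∇)u](x,y) = iα·e^{2iαx}·(ψ(y)ψ'''(y) − ψ'(y)ψ''(y)). -/

import Mathlib

/-- Partial derivative in `x` of a complex-valued field on `ℝ²`. -/
noncomputable def pdx (f : ℝ × ℝ → ℂ) (q : ℝ × ℝ) : ℂ :=
  deriv (fun x => f (x, q.2)) q.1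

/-- Partial derivative in `y` of a complex-valued field on `ℝ²`. -/
noncomputable def pdy (f : ℝ × ℝ → ℂ) (q : ℝ × ℝ) : ℂ :=
  deriv (fun y => f (q.1, y)) q.2

/-!
For a separable stream function `f(x) g(y)`, with velocity `u = (-f g', f' g)`, both components of
the convective term are again separable:
`(u·∇)u = (f f' · (g'² - g g''), (f'² - f f'') · g g')`.
Since `(h'² - h h'')' = h'' h' - h h'''`, its curl has one term for each of the two profiles.
For `f = exp (k x)` the quantity `f'² - f f''` vanishes, so only the term carrying `g'''` is left.
-/

theorem deriv_deriv_sq_sub_mul_deriv_deriv {𝕜 A : Type*} [NontriviallyNormedField 𝕜]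
    [NormedRing A] [NormedAlgebra 𝕜 A] {h : 𝕜 → A} {t : 𝕜} (h₀ : DifferentiableAt 𝕜 h t)
    (h₁ : DifferentiableAt 𝕜 (deriv h) t) (h₂ : DifferentiableAt 𝕜 (deriv (deriv h)) t) :
    deriv (deriv h ^ 2 - h * deriv (deriv h)) t =
      deriv (deriv h) t * deriv h t - h t * deriv (deriv (deriv h)) t := by
  have hsq := h₁.hasDerivAt.mul h₁.hasDerivAt
  have hmul := h₀.hasDerivAt.mul h₂.hasDerivAt
  rw [sq, (hsq.sub hmul).deriv]
  abel

/-- The scalar curl `∇×v = ∂ₓv₂ - ∂_y v₁` of the planar field with components `v₁`, `v₂`. -/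
noncomputable def scalarCurl (v₁ v₂ : ℝ × ℝ → ℂ) (q : ℝ × ℝ) : ℂ :=
  pdx v₂ q - pdy v₁ q

/-- The derivative `(u·∇)φ` of a scalar field `φ` along the planar field with components `u₁`, `u₂`.
The convective term `(u·∇)v` consists of this derivative of each component of `v`. -/
noncomputable def advect (u₁ u₂ φ : ℝ × ℝ → ℂ) (p : ℝ × ℝ) : ℂ :=
  u₁ p * pdx φ p + u₂ p * pdy φ p

/-- The separable field `f(x) g(y)` on the plane. As a stream function, its velocity `∇⊥` has the
components `separable f (-deriv g)` and `separable (deriv f) g`. -/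
def separable (f g : ℝ → ℂ) (p : ℝ × ℝ) : ℂ :=
  f p.1 * g p.2

theorem pdx_separable (f g : ℝ → ℂ) : pdx (separable f g) = separable (deriv f) g :=
  funext fun q => deriv_mul_const_field (g q.2)

theorem pdy_separable (f g : ℝ → ℂ) : pdy (separable f g) = separable f (deriv g) :=
  funext fun q => deriv_const_mul_field (f q.1)

theorem advect_separable_fst (f g : ℝ → ℂ) :
    advect (separable f (-deriv g)) (separable (deriv f) g) (separable f (-deriv g)) =
      separable (f * deriv f) (deriv g ^ 2 - g * deriv (deriv g)) := by
  funext p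
  simp only [advect, pdx_separable, pdy_separable, deriv.neg', separable, Pi.neg_apply,
    Pi.mul_apply, Pi.sub_apply, Pi.pow_apply]
  ring

theorem advect_separable_snd (f g : ℝ → ℂ) :
    advect (separable f (-deriv g)) (separable (deriv f) g) (separable (deriv f) g) =
      separable (deriv f ^ 2 - f * deriv (deriv f)) (g * deriv g) := by
  funext p
  simp only [advect, pdx_separable, pdy_separable, separable, Pi.neg_apply, Pi.mul_apply,
    Pi.sub_apply, Pi.pow_apply]
  ring

theorem scalarCurl_advect_separable {f g : ℝ → ℂ} {q : ℝ × ℝ}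
    (hf₀ : DifferentiableAt ℝ f q.1) (hf₁ : DifferentiableAt ℝ (deriv f) q.1)
    (hf₂ : DifferentiableAt ℝ (deriv (deriv f)) q.1)
    (hg₀ : DifferentiableAt ℝ g q.2) (hg₁ : DifferentiableAt ℝ (deriv g) q.2)
    (hg₂ : DifferentiableAt ℝ (deriv (deriv g)) q.2) :
    scalarCurl
        (advect (separable f (-deriv g)) (separable (deriv f) g) (separable f (-deriv g)))
        (advect (separable f (-deriv g)) (separable (deriv f) g) (separable (deriv f) g)) q =
      separable (deriv (deriv f) * deriv f - f * deriv (deriv (deriv f))) (g * deriv g) q -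
        separable (f * deriv f) (deriv (deriv g) * deriv g - g * deriv (deriv (deriv g))) q := by
  rw [advect_separable_fst, advect_separable_snd, scalarCurl, pdx_separable, pdy_separable]
  simp only [separable, deriv_deriv_sq_sub_mul_deriv_deriv hf₀ hf₁ hf₂,
    deriv_deriv_sq_sub_mul_deriv_deriv hg₀ hg₁ hg₂, Pi.sub_apply, Pi.mul_apply]

/-- The exponential profile `exp (k x)` on the real line; a plane wave of wavenumber `α` is the case
`k = iα`. -/
noncomputable def expMode (k : ℂ) (x : ℝ) : ℂ :=
  Complex.exp (k * x)

theorem differentiable_expMode (k : ℂ) : Differentiable ℝ (expMode k) := by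
  unfold expMode
  fun_prop

theorem deriv_expMode (k : ℂ) : deriv (expMode k) = k • expMode k := by
  funext x
  have hexp := ((Complex.ofRealCLM.hasDerivAt (x := x)).const_mul k).cexp.deriv
  exact hexp.trans (by simp [expMode, mul_comm])

theorem deriv_smul_expMode (c k : ℂ) : deriv (c • expMode k) = (c * k) • expMode k := by
  funext x
  rw [deriv_const_smul_field, deriv_expMode, Pi.smul_apply, Pi.smul_apply, smul_smul]

theorem expMode_mul_self (k : ℂ) : expMode k * expMode k = expMode (2 * k) := by
  funext x
  simp only [Pi.mul_apply, expMode, ← Complex.exp_add]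
  ring_nf

theorem scalarCurl_advect_expMode (k : ℂ) {g : ℝ → ℂ} {q : ℝ × ℝ}
    (hg₀ : DifferentiableAt ℝ g q.2) (hg₁ : DifferentiableAt ℝ (deriv g) q.2)
    (hg₂ : DifferentiableAt ℝ (deriv (deriv g)) q.2) :
    scalarCurl
        (advect (separable (expMode k) (-deriv g)) (separable (k • expMode k) g)
          (separable (expMode k) (-deriv g)))
        (advect (separable (expMode k) (-deriv g)) (separable (k • expMode k) g)
          (separable (k • expMode k) g)) q =
      separable (k • expMode (2 * k))
        (g * deriv (deriv (deriv g)) - deriv g * deriv (deriv g)) q := by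
  have hE₀ := differentiable_expMode k
  have hE₁ : Differentiable ℝ (deriv (expMode k)) := deriv_expMode k ▸ hE₀.const_smul k
  have hE₂ : Differentiable ℝ (deriv (deriv (expMode k))) := by
    simpa only [deriv_expMode, deriv_smul_expMode] using hE₀.const_smul (k * k)
  have hcurl := scalarCurl_advect_separable (hE₀ q.1) (hE₁ q.1) (hE₂ q.1) hg₀ hg₁ hg₂
  simp only [deriv_expMode, deriv_smul_expMode] at hcurl
  rw [hcurl, ← expMode_mul_self]
  simp only [separable, Pi.sub_apply, Pi.mul_apply, Pi.smul_apply, smul_eq_mul]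
  ring

theorem curl_convective_self_general (k : ℂ) {ψ : ℝ → ℂ} {u1 u2 : ℝ × ℝ → ℂ}
    (hu1 : ∀ q : ℝ × ℝ, u1 q = Complex.exp (k * q.1) * (-(deriv ψ q.2)))
    (hu2 : ∀ q : ℝ × ℝ, u2 q = Complex.exp (k * q.1) * (k * ψ q.2)) {q : ℝ × ℝ}
    (hψ₀ : DifferentiableAt ℝ ψ q.2) (hψ₁ : DifferentiableAt ℝ (deriv ψ) q.2)
    (hψ₂ : DifferentiableAt ℝ (deriv (deriv ψ)) q.2) :
    pdx (fun p => u1 p * pdx u2 p + u2 p * pdy u2 p) q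
        - pdy (fun p => u1 p * pdx u1 p + u2 p * pdy u1 p) q
      = k * Complex.exp (2 * k * q.1) *
          (ψ q.2 * deriv (deriv (deriv ψ)) q.2 - deriv ψ q.2 * deriv (deriv ψ) q.2) := by
  obtain rfl : u1 = separable (expMode k) (-deriv ψ) := funext hu1
  obtain rfl : u2 = separable (k • expMode k) ψ := funext fun p =>
    (hu2 p).trans (by simp only [separable, Pi.smul_apply, smul_eq_mul, expMode]; ring)
  exact scalarCurl_advect_expMode k hψ₀ hψ₁ hψ₂

/-- For `u = ∇⊥(e^{iαx}ψ(y))`, the scalar curl of the convective term `(u·∇)u` is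
`iα·e^{2iαx}·(ψψ''' − ψ'ψ'')`. -/
theorem curl_convective_self (α : ℝ) (ψ : ℝ → ℂ) (hψ : ContDiff ℝ 3 ψ)
    (u1 u2 : ℝ × ℝ → ℂ)
    (hu1 : ∀ q : ℝ × ℝ, u1 q = Complex.exp (Complex.I * α * q.1) * (-(deriv ψ q.2)))
    (hu2 : ∀ q : ℝ × ℝ, u2 q = Complex.exp (Complex.I * α * q.1) * (Complex.I * α * ψ q.2)) :
    ∀ q : ℝ × ℝ,
      pdx (fun p => u1 p * pdx u2 p + u2 p * pdy u2 p) q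
        - pdy (fun p => u1 p * pdx u1 p + u2 p * pdy u1 p) q
      = Complex.I * α * Complex.exp (2 * Complex.I * α * q.1) *
          (ψ q.2 * deriv (deriv (deriv ψ)) q.2 - deriv ψ q.2 * deriv (deriv ψ) q.2) := by
  intro q
  simpa only [mul_assoc] using curl_convective_self_general (Complex.I * α) hu1 hu2
    (hψ.differentiable three_ne_zero q.2) ((hψ.iterate_deriv' 2 1).differentiable two_ne_zero q.2)
    ((hψ.iterate_deriv' 1 2).differentiable one_ne_zero q.2)
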